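/- arXiv:1602.00461 — 5 statements merged into one kernel-verified Lean document; each statement's English description precedes it below -/
import Mathlib

section
/- Let p≥1 and let {ψ_j : j≥0} ⊂ ℝ satisfy Σ_{j=0}^∞ |ψ_j| < ∞. Then 𝒲_n(p) = O(n^{1/p}) as n→∞; that is, there is a constant C such that 𝒲_n(p) ≤ C·n^{1/p} for all n≥1. -/
open Filter

/-- The coefficients `ψ` extended to `ℤ` by `ψ_j = 0` for `j < 0`. -/
noncomputable def psiZ (ψ : ℕ → ℝ) : ℤ → ℝ := fun j => if 0 ≤ j then ψ j.toNat else 0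

/-- `w_{nj} = ∑_{k=1}^n ψ_{k-j}`. -/
noncomputable def wCoef (ψ : ℕ → ℝ) (n : ℕ) (j : ℤ) : ℝ :=
  ∑ k ∈ Finset.Icc (1 : ℤ) (n : ℤ), psiZ ψ (k - j)

/-- `𝒲_n(p) = (∑_{j=-∞}^n |w_{nj}|^p)^{1/p}`; since `w_{nj} = 0` for `j > n`, the sum
may be taken over all of `ℤ`. -/
noncomputable def Wnorm (ψ : ℕ → ℝ) (p : ℝ) (n : ℕ) : ℝ :=
  (∑' j : ℤ, |wCoef ψ n j| ^ p) ^ (1 / p)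

theorem summable_abs_psiZ {ψ : ℕ → ℝ} (hψ : Summable fun j => |ψ j|) :
    Summable fun j => |psiZ ψ j| := by
  refine (Function.Injective.summable_iff (g := ((↑) : ℕ → ℤ)) Nat.cast_injective ?_).1 ?_
  · intro x hx
    have hneg : ¬ 0 ≤ x := fun h => hx ⟨x.toNat, Int.toNat_of_nonneg h⟩
    simp [psiZ, hneg]
  · simpa [Function.comp_def, psiZ] using hψ

theorem summable_abs_psiZ_sub {ψ : ℕ → ℝ} (hψ : Summable fun j => |ψ j|) (k : ℤ) :
    Summable fun j => |psiZ ψ (k - j)| :=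
  (Equiv.subLeft k).summable_iff.2 (summable_abs_psiZ hψ)

theorem abs_wCoef_le_sum (ψ : ℕ → ℝ) (n : ℕ) (j : ℤ) :
    |wCoef ψ n j| ≤ ∑ k ∈ Finset.Icc (1 : ℤ) n, |psiZ ψ (k - j)| :=
  Finset.abs_sum_le_sum_abs _ _

theorem abs_wCoef_le_tsum {ψ : ℕ → ℝ} (hψ : Summable fun j => |ψ j|) (n : ℕ) (j : ℤ) :
    |wCoef ψ n j| ≤ ∑' i, |psiZ ψ i| := by
  have hs : Summable fun k => |psiZ ψ (k - j)| :=
    (Equiv.subRight j).summable_iff.2 (summable_abs_psiZ hψ)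
  calc |wCoef ψ n j| ≤ ∑ k ∈ Finset.Icc (1 : ℤ) n, |psiZ ψ (k - j)| := abs_wCoef_le_sum ψ n j
    _ ≤ ∑' k, |psiZ ψ (k - j)| := hs.sum_le_tsum _ fun _ _ => abs_nonneg _
    _ = ∑' i, |psiZ ψ i| := (Equiv.subRight j).tsum_eq fun i => |psiZ ψ i|

theorem summable_abs_wCoef {ψ : ℕ → ℝ} (hψ : Summable fun j => |ψ j|) (n : ℕ) :
    Summable fun j => |wCoef ψ n j| :=
  Summable.of_nonneg_of_le (fun _ => abs_nonneg _) (abs_wCoef_le_sum ψ n)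
    (summable_sum fun k _ => summable_abs_psiZ_sub hψ k)

theorem tsum_abs_wCoef_le {ψ : ℕ → ℝ} (hψ : Summable fun j => |ψ j|) (n : ℕ) :
    ∑' j, |wCoef ψ n j| ≤ n * ∑' i, |psiZ ψ i| := by
  calc ∑' j, |wCoef ψ n j|
      ≤ ∑' j, ∑ k ∈ Finset.Icc (1 : ℤ) n, |psiZ ψ (k - j)| :=
        (summable_abs_wCoef hψ n).tsum_le_tsum (abs_wCoef_le_sum ψ n)
          (summable_sum fun k _ => summable_abs_psiZ_sub hψ k)
    _ = ∑ k ∈ Finset.Icc (1 : ℤ) n, ∑' j, |psiZ ψ (k - j)| :=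
        Summable.tsum_finsetSum fun k _ => summable_abs_psiZ_sub hψ k
    _ = ∑ _k ∈ Finset.Icc (1 : ℤ) n, ∑' i, |psiZ ψ i| :=
        Finset.sum_congr rfl fun k _ => (Equiv.subLeft k).tsum_eq fun i => |psiZ ψ i|
    _ = n * ∑' i, |psiZ ψ i| := by simp

theorem abs_wCoef_rpow_le {p : ℝ} (hp : 1 ≤ p) {ψ : ℕ → ℝ} (hψ : Summable fun j => |ψ j|)
    (n : ℕ) (j : ℤ) :
    |wCoef ψ n j| ^ p ≤ (∑' i, |psiZ ψ i|) ^ (p - 1) * |wCoef ψ n j| := by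
  calc |wCoef ψ n j| ^ p = |wCoef ψ n j| ^ (p - 1) * |wCoef ψ n j| := by
        rw [← Real.rpow_add_one' (abs_nonneg _) (by linarith), sub_add_cancel]
    _ ≤ _ := by
        gcongr
        exact abs_wCoef_le_tsum hψ n j

theorem Wnorm_bigO_of_summable
    (p : ℝ) (hp : 1 ≤ p) (ψ : ℕ → ℝ) (hψ : Summable fun j => |ψ j|) :
    ∃ C : ℝ, ∀ n : ℕ, 1 ≤ n → Wnorm ψ p n ≤ C * (n : ℝ) ^ (1 / p) := by
  set S := ∑' i, |psiZ ψ i|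
  have hS0 : 0 ≤ S := tsum_nonneg fun _ => abs_nonneg _
  refine ⟨(S ^ (p - 1) * S) ^ (1 / p), fun n _ => ?_⟩
  have hmaj : Summable fun j => S ^ (p - 1) * |wCoef ψ n j| :=
    (summable_abs_wCoef hψ n).mul_left _
  have hsum : Summable fun j => |wCoef ψ n j| ^ p :=
    Summable.of_nonneg_of_le (fun _ => by positivity) (abs_wCoef_rpow_le hp hψ n) hmaj
  rw [Wnorm, ← Real.mul_rpow (by positivity) (by positivity)]
  refine Real.rpow_le_rpow (tsum_nonneg fun _ => by positivity) ?_ (by positivity)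
  calc ∑' j, |wCoef ψ n j| ^ p ≤ ∑' j, S ^ (p - 1) * |wCoef ψ n j| :=
        hsum.tsum_le_tsum (abs_wCoef_rpow_le hp hψ n) hmaj
    _ = S ^ (p - 1) * ∑' j, |wCoef ψ n j| := tsum_mul_left
    _ ≤ S ^ (p - 1) * (n * S) := by
        gcongr
        exact tsum_abs_wCoef_le hψ n
    _ = S ^ (p - 1) * S * n := by ring
end

section
/- Let p>1 and 1/p<d<1, and let ψ_j = (j+1)^{-d} for j≥0. Then 𝒲_n(p) ~ c·n^{1/p+1-d} as n→∞ for some positive constant c; i.e., 𝒲_n(p)/n^{1/p+1-d} converges to a positive limit. -/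
open Filter

open MeasureTheory Set Topology

/-- The partial sum `∑_{i=1}^m i^{-d}`. -/
noncomputable def powerSum (d : ℝ) (m : ℕ) : ℝ := ∑ i ∈ Finset.range m, ((i : ℝ) + 1) ^ (-d)

lemma powerSum_succ (d : ℝ) (m : ℕ) :
    powerSum d (m + 1) = powerSum d m + ((m : ℝ) + 1) ^ (-d) :=
  Finset.sum_range_succ _ _

lemma powerSum_monotone (d : ℝ) : Monotone (powerSum d) :=
  monotone_nat_of_le_succ fun m => by
    rw [powerSum_succ]
    exact le_add_of_nonneg_right (by positivity)

/-- The graph of the concave function `x ↦ x ^ q` lies below its tangents. -/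
lemma rpow_le_tangent {q a b : ℝ} (hq0 : 0 ≤ q) (hq1 : q ≤ 1) (ha : 0 < a) (hb : 0 ≤ b) :
    b ^ q ≤ a ^ q + q * a ^ (q - 1) * (b - a) := by
  have hs : -1 ≤ (b - a) / a := by
    rw [le_div_iff₀ ha]
    linarith
  have h := rpow_one_add_le_one_add_mul_self hs hq0 hq1
  have hba : 1 + (b - a) / a = b / a := by field_simp; ring
  rw [hba, Real.div_rpow hb ha.le, div_le_iff₀ (by positivity)] at h
  refine h.trans_eq ?_
  rw [Real.rpow_sub_one ha.ne']
  field_simp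

lemma powerSum_le {d : ℝ} (hd0 : 0 ≤ d) (hd1 : d < 1) (m : ℕ) :
    powerSum d m ≤ (m : ℝ) ^ (1 - d) / (1 - d) := by
  have hq : 0 < 1 - d := by linarith
  rw [le_div_iff₀ hq]
  induction m with
  | zero => simp [powerSum, Real.zero_rpow hq.ne']
  | succ m ih =>
    have h := rpow_le_tangent hq.le (by linarith) (a := (m : ℝ) + 1) (b := m)
      (by positivity) (by positivity)
    rw [show 1 - d - 1 = -d by ring] at h
    rw [powerSum_succ]
    push_cast
    linarith

lemma le_powerSum {d : ℝ} (hd0 : 0 ≤ d) (hd1 : d < 1) (m : ℕ) :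
    ((m : ℝ) ^ (1 - d) - 1) / (1 - d) ≤ powerSum d m := by
  have hq : 0 < 1 - d := by linarith
  rw [div_le_iff₀ hq]
  have key : ((m : ℝ) + 1) ^ (1 - d) - 1 ≤ powerSum d m * (1 - d) := by
    induction m with
    | zero => simp [powerSum]
    | succ m ih =>
      have h := rpow_le_tangent hq.le (by linarith) (a := (m : ℝ) + 1) (b := (m : ℝ) + 1 + 1)
        (by positivity) (by positivity)
      rw [show 1 - d - 1 = -d by ring] at h
      rw [powerSum_succ]
      push_cast
      linarith
  have : (m : ℝ) ^ (1 - d) ≤ ((m : ℝ) + 1) ^ (1 - d) := by gcongr; linarith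
  linarith

lemma powerSum_add_sub_le {d : ℝ} (hd0 : 0 ≤ d) {a : ℕ} (ha : 0 < a) (n : ℕ) :
    powerSum d (a + n) - powerSum d a ≤ n * (a : ℝ) ^ (-d) := by
  induction n with
  | zero => simp
  | succ n ih =>
    have ha' : (0 : ℝ) < a := by exact_mod_cast ha
    have : ((a : ℝ) + n + 1) ^ (-d) ≤ (a : ℝ) ^ (-d) :=
      Real.rpow_le_rpow_of_nonpos ha' (by linarith [n.cast_nonneg (α := ℝ)]) (by linarith)
    rw [← add_assoc, powerSum_succ]
    push_cast
    linarith

lemma tendsto_powerSum_div {d : ℝ} (hd0 : 0 ≤ d) (hd1 : d < 1) {m : ℕ → ℕ} {y : ℝ}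
    (hm : Tendsto (fun n => (m n : ℝ) / n) atTop (𝓝 y)) :
    Tendsto (fun n => powerSum d (m n) / (n : ℝ) ^ (1 - d)) atTop (𝓝 (y ^ (1 - d) / (1 - d))) := by
  have hq : 0 < 1 - d := by linarith
  have hpow := hm.rpow_const (p := 1 - d) (Or.inr hq.le)
  have hinv : Tendsto (fun n : ℕ => ((n : ℝ) ^ (1 - d))⁻¹) atTop (𝓝 0) :=
    ((tendsto_rpow_atTop hq).comp tendsto_natCast_atTop_atTop).inv_tendsto_atTop
  have hlow := (hpow.sub hinv).div_const (1 - d)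
  rw [sub_zero] at hlow
  refine tendsto_of_tendsto_of_tendsto_of_le_of_le' hlow (hpow.div_const (1 - d)) ?_ ?_
  · filter_upwards [eventually_gt_atTop 0] with n hn
    have hn' : (0 : ℝ) < (n : ℝ) ^ (1 - d) := by positivity
    rw [Real.div_rpow (by positivity) (by positivity), ← one_div, ← sub_div, div_right_comm]
    gcongr
    exact le_powerSum hd0 hd1 _
  · filter_upwards with n
    rw [Real.div_rpow (by positivity) (by positivity), div_right_comm]
    gcongr
    exact powerSum_le hd0 hd1 _

lemma wCoef_eq_powerSum_sub {d : ℝ} {ψ : ℕ → ℝ} (hψ : ∀ j : ℕ, ψ j = ((j : ℝ) + 1) ^ (-d))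
    (n i : ℕ) : wCoef ψ n (n - i) = powerSum d (i + 1) - powerSum d (i + 1 - n) := by
  have hreindex : wCoef ψ n (n - i) = ∑ l ∈ Finset.range n, psiZ ψ (i - l) := by
    refine Finset.sum_bij' (fun k _ => (n - k).toNat) (fun l _ => (n : ℤ) - l) ?_ ?_ ?_ ?_ ?_
    · intro k hk
      simp only [Finset.mem_Icc, Finset.mem_range] at *
      omega
    · intro l hl
      simp only [Finset.mem_Icc, Finset.mem_range] at *
      omega
    · intro k hk
      simp only [Finset.mem_Icc] at *
      omega
    · intro l hl
      omega
    · intro k hk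
      simp only [Finset.mem_Icc] at *
      congr 1
      omega
  rw [hreindex]
  clear hreindex
  induction n with
  | zero => simp
  | succ n ih =>
    rw [Finset.sum_range_succ, ih, psiZ]
    split_ifs with h
    · obtain ⟨a, rfl⟩ : ∃ a, i = n + a := ⟨i - n, by omega⟩
      rw [show n + a + 1 - n = a + 1 by omega, show n + a + 1 - (n + 1) = a by omega,
        show (((n + a : ℕ) : ℤ) - n).toNat = a by omega, hψ, powerSum_succ d a]
      ring
    · rw [show i + 1 - n = 0 by omega, show i + 1 - (n + 1) = 0 by omega, add_zero]

lemma wCoef_eq_zero {ψ : ℕ → ℝ} {n : ℕ} {j : ℤ} (hj : n < j) : wCoef ψ n j = 0 := by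
  refine Finset.sum_eq_zero fun k hk => if_neg ?_
  rw [Finset.mem_Icc] at hk
  omega

lemma map_floor_volume :
    (volume.restrict (Ioi (0 : ℝ))).map (fun x => ⌊x⌋₊) = Measure.count := by
  refine Measure.ext_of_singleton fun n => ?_
  rw [Measure.map_apply Nat.measurable_floor (measurableSet_singleton n),
    Measure.count_singleton, restrict_Ioi_eq_restrict_Ici,
    Measure.restrict_apply (Nat.measurable_floor (measurableSet_singleton n))]
  have : (fun x : ℝ => ⌊x⌋₊) ⁻¹' {n} ∩ Ici 0 = Ico (n : ℝ) (n + 1) := by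
    ext x
    simp only [mem_inter_iff, mem_preimage, mem_singleton_iff, mem_Ici, mem_Ico]
    constructor
    · rintro ⟨h, hx⟩
      exact (Nat.floor_eq_iff hx).1 h
    · intro h
      have hx : 0 ≤ x := n.cast_nonneg.trans h.1
      exact ⟨(Nat.floor_eq_iff hx).2 h, hx⟩
  rw [this]
  simp

lemma integral_comp_floor_mul (f : ℕ → ℝ) {n : ℕ} (hn : 0 < n) :
    ∫ x in Ioi (0 : ℝ), f ⌊n * x⌋₊ = (n : ℝ)⁻¹ * ∑' i, f i := by
  have hn' : (0 : ℝ) < n := by exact_mod_cast hn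
  rw [integral_comp_mul_left_Ioi (fun x => f ⌊x⌋₊) 0 hn', mul_zero, smul_eq_mul]
  congr 1
  have hmap := integral_map (μ := volume.restrict (Ioi (0 : ℝ))) (f := f)
    Nat.measurable_floor.aemeasurable measurable_from_nat.aestronglyMeasurable
  rw [← hmap, map_floor_volume]
  by_cases h : Integrable f Measure.count
  · simp [integral_countable h]
  · rw [integral_undef h,
      tsum_eq_zero_of_not_summable fun hs : Summable f => h (integrable_count_iff.2 hs.norm)]

lemma tendsto_floor_add_one_div {x : ℝ} (hx : 0 ≤ x) :
    Tendsto (fun n : ℕ => ((⌊n * x⌋₊ + 1 : ℕ) : ℝ) / n) atTop (𝓝 x) := by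
  have h := ((tendsto_nat_floor_mul_div_atTop hx).comp tendsto_natCast_atTop_atTop).add
    (tendsto_inv_atTop_nhds_zero_nat (𝕜 := ℝ))
  rw [add_zero] at h
  refine h.congr fun n => ?_
  simp [mul_comm x, add_div]

lemma tendsto_floor_add_one_sub_div {x : ℝ} (hx : 0 ≤ x) :
    Tendsto (fun n : ℕ => ((⌊n * x⌋₊ + 1 - n : ℕ) : ℝ) / n) atTop (𝓝 (max (x - 1) 0)) := by
  have h := ((tendsto_floor_add_one_div hx).sub_const 1).max
    (tendsto_const_nhds (x := (0 : ℝ)))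
  refine h.congr' ?_
  filter_upwards [eventually_gt_atTop 0] with n hn
  have hn' : (0 : ℝ) < n := by exact_mod_cast hn
  rcases le_total n (⌊n * x⌋₊ + 1) with h | h
  · rw [Nat.cast_sub h, sub_div, div_self hn'.ne', max_eq_left]
    rw [sub_nonneg, one_le_div hn']
    exact_mod_cast h
  · rw [Nat.sub_eq_zero_of_le h, max_eq_right]
    · simp
    · rw [sub_nonpos, div_le_one hn']
      exact_mod_cast h

lemma powerSum_sub_div_le {d : ℝ} (hd0 : 0 ≤ d) (hd1 : d < 1) {n : ℕ} (hn : 0 < n) {x : ℝ}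
    (hx : 0 < x) :
    (powerSum d (⌊n * x⌋₊ + 1) - powerSum d (⌊n * x⌋₊ + 1 - n)) / (n : ℝ) ^ (1 - d) ≤
      (3 ^ (1 - d) / (1 - d) + 1) * 3 ^ d * (1 + x) ^ (-d) := by
  have hq : 0 < 1 - d := by linarith
  have hn' : (1 : ℝ) ≤ n := by exact_mod_cast hn
  have hrw : (3 : ℝ) ^ d * (1 + x) ^ (-d) = ((1 + x) / 3) ^ (-d) := by
    rw [Real.div_rpow (by positivity) (by positivity), Real.rpow_neg (x := 3) (by positivity)]
    field_simp
  rw [mul_assoc, hrw]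
  have hK : 0 ≤ (3 : ℝ) ^ (1 - d) / (1 - d) := by positivity
  have hfl : n * x < (⌊n * x⌋₊ : ℝ) + 1 := Nat.lt_floor_add_one _
  rcases le_or_gt x 2 with h2 | h2
  · have h1 : 1 ≤ ((1 + x) / 3) ^ (-d) :=
      Real.one_le_rpow_of_pos_of_le_one_of_nonpos (by positivity) (by linarith) (by linarith)
    have h0 : 0 ≤ powerSum d (⌊n * x⌋₊ + 1 - n) := Finset.sum_nonneg fun i _ => by positivity
    have hS := powerSum_le hd0 hd1 (⌊n * x⌋₊ + 1)
    have hle : ((⌊n * x⌋₊ + 1 : ℕ) : ℝ) ≤ 3 * n := by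
      have := Nat.floor_le (show 0 ≤ n * x by positivity)
      push_cast
      nlinarith
    have hS' : ((⌊n * x⌋₊ + 1 : ℕ) : ℝ) ^ (1 - d) ≤ 3 ^ (1 - d) * (n : ℝ) ^ (1 - d) := by
      rw [← Real.mul_rpow (by positivity) (by positivity)]
      gcongr
    calc _ ≤ (3 : ℝ) ^ (1 - d) / (1 - d) := by
          rw [div_le_iff₀ (by positivity), div_mul_eq_mul_div]
          have := div_le_div_of_nonneg_right hS' hq.le
          linarith
      _ ≤ _ := by nlinarith
  · have hni : n ≤ ⌊n * x⌋₊ := Nat.le_floor (by nlinarith)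
    obtain ⟨a, ha⟩ : ∃ a, ⌊n * x⌋₊ + 1 = a + n := ⟨⌊n * x⌋₊ + 1 - n, by omega⟩
    have ha0 : 0 < a := by omega
    have hax : n * ((1 + x) / 3) ≤ (a : ℝ) := by
      have : (⌊n * x⌋₊ : ℝ) + 1 = a + n := by exact_mod_cast ha
      nlinarith
    rw [ha, Nat.add_sub_cancel, div_le_iff₀ (by positivity)]
    calc _ ≤ n * (a : ℝ) ^ (-d) := powerSum_add_sub_le hd0 ha0 n
      _ ≤ n * (n * ((1 + x) / 3)) ^ (-d) := by
          gcongr ?_ * ?_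
          exact Real.rpow_le_rpow_of_nonpos (by positivity) hax (by linarith)
      _ = ((1 + x) / 3) ^ (-d) * (n : ℝ) ^ (1 - d) := by
          rw [Real.mul_rpow (by positivity) (by positivity), sub_eq_add_neg,
            Real.rpow_add (by positivity), Real.rpow_one]
          ring
      _ ≤ _ := by
          gcongr
          exact le_mul_of_one_le_left (by positivity) (by linarith)

lemma tsum_abs_wCoef_rpow {p d : ℝ} (hp : 0 < p) {ψ : ℕ → ℝ}
    (hψ : ∀ j : ℕ, ψ j = ((j : ℝ) + 1) ^ (-d)) (n : ℕ) :
    ∑' j : ℤ, |wCoef ψ n j| ^ p =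
      ∑' i : ℕ, (powerSum d (i + 1) - powerSum d (i + 1 - n)) ^ p := by
  have hinj : Function.Injective fun i : ℕ => (n : ℤ) - i := fun a b h => by
    simpa using h
  rw [← hinj.tsum_eq]
  · refine tsum_congr fun i => ?_
    rw [wCoef_eq_powerSum_sub hψ, abs_of_nonneg]
    exact sub_nonneg.2 (powerSum_monotone d (Nat.sub_le _ _))
  · intro j hj
    by_contra hcon
    refine hj ?_
    have : (n : ℤ) < j := by
      by_contra! hle
      exact hcon ⟨(n - j).toNat, by simp only; omega⟩
    simp [wCoef_eq_zero this, Real.zero_rpow hp.ne']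

theorem Wnorm_asymptotics_powerlaw
    (p d : ℝ) (hp : 1 < p) (hd1 : 1 / p < d) (hd2 : d < 1)
    (ψ : ℕ → ℝ) (hψ : ∀ j : ℕ, ψ j = ((j : ℝ) + 1) ^ (-d)) :
    ∃ c : ℝ, 0 < c ∧
      Tendsto (fun n : ℕ => Wnorm ψ p n / (n : ℝ) ^ (1 / p + 1 - d)) atTop (nhds c) := by
  have hp0 : 0 < p := by linarith
  have hd0 : 0 < d := lt_trans (by positivity) hd1
  have hq : 0 < 1 - d := by linarith
  have hdp : 1 < d * p := (div_lt_iff₀ hp0).1 hd1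
  set T : ℕ → ℕ → ℝ := fun n i =>
    (powerSum d (i + 1) - powerSum d (i + 1 - n)) / (n : ℝ) ^ (1 - d) with hT
  set F : ℕ → ℝ → ℝ := fun n x => T n ⌊n * x⌋₊ ^ p with hF
  set G : ℝ → ℝ := fun x =>
    (x ^ (1 - d) / (1 - d) - max (x - 1) 0 ^ (1 - d) / (1 - d)) ^ p with hG
  set K : ℝ := (3 ^ (1 - d) / (1 - d) + 1) * 3 ^ d with hK
  set B : ℝ → ℝ := fun x => K ^ p * (1 + ‖x‖) ^ (-(d * p)) with hB
  have hK0 : 0 < K := by positivity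
  have hT0 : ∀ n i, 0 ≤ T n i := fun n i =>
    div_nonneg (sub_nonneg.2 (powerSum_monotone d (Nat.sub_le _ _))) (by positivity)
  have hBint : Integrable B (volume.restrict (Ioi 0)) :=
    ((integrable_one_add_norm (by simpa using hdp)).const_mul _).integrableOn
  have hFmeas : ∀ n, AEStronglyMeasurable (F n) (volume.restrict (Ioi 0)) := fun n =>
    ((measurable_from_nat (f := fun i => T n i ^ p)).comp
      (Nat.measurable_floor.comp (measurable_const_mul (n : ℝ)))).aestronglyMeasurable
  have hFB : ∀ n, 0 < n → ∀ x, 0 < x → ‖F n x‖ ≤ B x := by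
    intro n hn x hx
    rw [Real.norm_of_nonneg (Real.rpow_nonneg (hT0 _ _) _)]
    simp only [hB, Real.norm_of_nonneg hx.le]
    rw [← neg_mul, Real.rpow_mul (by positivity), ← Real.mul_rpow hK0.le (by positivity)]
    exact Real.rpow_le_rpow (hT0 _ _) (powerSum_sub_div_le hd0.le hd2 hn hx) hp0.le
  have hFG : ∀ x, 0 < x → Tendsto (fun n => F n x) atTop (𝓝 (G x)) := by
    intro x hx
    refine Tendsto.rpow_const ?_ (Or.inr hp0.le)
    simp only [hT, sub_div]
    exact (tendsto_powerSum_div hd0.le hd2 (tendsto_floor_add_one_div hx.le)).sub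
      (tendsto_powerSum_div hd0.le hd2 (tendsto_floor_add_one_sub_div hx.le))
  have hlim : Tendsto (fun n => ∫ x in Ioi 0, F n x) atTop (𝓝 (∫ x in Ioi 0, G x)) := by
    refine tendsto_integral_filter_of_dominated_convergence B (Eventually.of_forall hFmeas) ?_
      hBint ((ae_restrict_mem measurableSet_Ioi).mono fun x hx => hFG x hx)
    filter_upwards [eventually_gt_atTop 0] with n hn
    exact (ae_restrict_mem measurableSet_Ioi).mono fun x hx => hFB n hn x hx
  have hGpos : ∀ x, 0 < x → 0 < G x := by
    intro x hx
    refine Real.rpow_pos_of_pos ?_ _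
    rw [sub_pos]
    gcongr
    exact max_lt (by linarith) hx
  have hGint : IntegrableOn G (Ioi 0) := by
    refine hBint.mono' (aestronglyMeasurable_of_tendsto_ae atTop hFmeas
      ((ae_restrict_mem measurableSet_Ioi).mono fun x hx => hFG x hx)) ?_
    refine (ae_restrict_mem measurableSet_Ioi).mono fun x hx => ?_
    refine le_of_tendsto (hFG x hx).norm ?_
    filter_upwards [eventually_gt_atTop 0] with n hn using hFB n hn x hx
  have hC : 0 < ∫ x in Ioi 0, G x := by
    rw [setIntegral_pos_iff_support_of_nonneg_ae
      ((ae_restrict_mem measurableSet_Ioi).mono fun x hx => (hGpos x hx).le) hGint,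
      inter_eq_right.2 (show Ioi 0 ⊆ Function.support G from fun x hx => (hGpos x hx).ne')]
    simp
  refine ⟨(∫ x in Ioi 0, G x) ^ (1 / p), by positivity, ?_⟩
  refine (hlim.rpow_const (Or.inr (by positivity))).congr' ?_
  filter_upwards [eventually_gt_atTop 0] with n hn
  have hn' : (0 : ℝ) < n := by exact_mod_cast hn
  have hsum : ∑' i, T n i ^ p =
      (∑' j : ℤ, |wCoef ψ n j| ^ p) / ((n : ℝ) ^ (1 - d)) ^ p := by
    rw [tsum_abs_wCoef_rpow hp0 hψ, ← tsum_div_const]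
    refine tsum_congr fun i => Real.div_rpow ?_ (by positivity) _
    exact sub_nonneg.2 (powerSum_monotone d (Nat.sub_le _ _))
  have hA : 0 ≤ ∑' j : ℤ, |wCoef ψ n j| ^ p := tsum_nonneg fun j => by positivity
  simp only [hF]
  rw [integral_comp_floor_mul (fun i => T n i ^ p) hn,
    hsum, Wnorm, inv_mul_eq_div, div_div, Real.div_rpow hA (by positivity),
    Real.mul_rpow (by positivity) hn'.le, ← Real.rpow_mul (by positivity),
    mul_one_div_cancel hp0.ne', Real.rpow_one, ← Real.rpow_add hn']
  congr 2
  ring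
end

section
/- Let p>1 and 1/p<d<1. Then the sequence n^{-(1+p(1-d))}·Σ_{j=1}^∞ |Σ_{k=1}^n (k+j)^{-d}|^p converges as n→∞ to ∫_0^∞ |∫_0^1 (x+y)^{-d} dx|^p dy, and this limit is finite and positive. -/
open Filter MeasureTheory intervalIntegral

/-- The closed form of `∫ x in 0..1, (x + y) ^ (-d)` for `0 ≤ y` and `d < 1`. -/
noncomputable def shiftedPowerIntegral (d y : ℝ) : ℝ :=
  ((y + 1) ^ (1 - d) - y ^ (1 - d)) / (1 - d)

lemma integral_add_rpow_neg {d y : ℝ} (hd : d < 1) :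
    ∫ x in (0:ℝ)..1, (x + y) ^ (-d) = shiftedPowerIntegral d y := by
  rw [intervalIntegral.integral_comp_add_right (fun x : ℝ => x ^ (-d)),
    integral_rpow (Or.inl (by linarith)), shiftedPowerIntegral]
  ring_nf

lemma continuous_shiftedPowerIntegral {d : ℝ} (hd : d < 1) :
    Continuous (shiftedPowerIntegral d) := by
  unfold shiftedPowerIntegral
  have h : ∀ x : ℝ, x ≠ 0 ∨ 0 ≤ 1 - d := fun _ => Or.inr (by linarith)
  exact (((continuous_id.add continuous_const).rpow_const fun _ => h _).sub
    (continuous_id.rpow_const fun _ => h _)).div_const _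

lemma shiftedPowerIntegral_pos {d y : ℝ} (hd : d < 1) (hy : 0 ≤ y) :
    0 < shiftedPowerIntegral d y :=
  div_pos (sub_pos.2 (Real.rpow_lt_rpow hy (by linarith) (by linarith))) (by linarith)

lemma hasDerivAt_rpow_one_sub_div {d y : ℝ} (hd : d < 1) (hy : 0 < y) :
    HasDerivAt (fun z : ℝ => z ^ (1 - d) / (1 - d)) (y ^ (-d)) y := by
  have h := (Real.hasDerivAt_rpow_const (p := 1 - d) (Or.inl hy.ne')).div_const (1 - d)
  have h1 : 1 - d ≠ 0 := by linarith
  rwa [mul_div_cancel_left₀ _ h1, show 1 - d - 1 = -d by ring] at h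

lemma antitoneOn_shiftedPowerIntegral {d : ℝ} (hd0 : 0 ≤ d) (hd : d < 1) :
    AntitoneOn (shiftedPowerIntegral d) (Set.Ici 0) := by
  have hder : ∀ y : ℝ, 0 < y →
      HasDerivAt (shiftedPowerIntegral d) ((y + 1) ^ (-d) - y ^ (-d)) y := by
    intro y hy
    have h1 := (hasDerivAt_rpow_one_sub_div (y := y + 1) hd (by linarith)).comp_add_const y 1
    refine (h1.sub (hasDerivAt_rpow_one_sub_div hd hy)).congr_of_eventuallyEq
      (Eventually.of_forall fun z => ?_)
    simp [shiftedPowerIntegral, sub_div]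
  refine antitoneOn_of_deriv_nonpos (convex_Ici 0)
    (continuous_shiftedPowerIntegral hd).continuousOn ?_ ?_
  · rw [interior_Ici]
    exact fun y hy => (hder y hy).differentiableAt.differentiableWithinAt
  · rw [interior_Ici]
    intro y hy
    rw [(hder y hy).deriv, sub_nonpos]
    exact Real.rpow_le_rpow_of_nonpos hy (by linarith) (by linarith)

lemma shiftedPowerIntegral_mem_Icc {d y : ℝ} (hd0 : 0 ≤ d) (hd : d < 1) (hy : 0 < y) :
    shiftedPowerIntegral d y ∈ Set.Icc ((y + 1) ^ (-d)) (y ^ (-d)) := by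
  have hcont : ContinuousOn (fun x : ℝ => (x + y) ^ (-d)) (Set.uIcc 0 1) := by
    refine (continuousOn_id.add continuousOn_const).rpow_const fun x hx => Or.inl ?_
    rw [Set.uIcc_of_le zero_le_one] at hx
    exact (add_pos_of_nonneg_of_pos hx.1 hy).ne'
  rw [← integral_add_rpow_neg hd]
  constructor
  · have := intervalIntegral.integral_mono_on (μ := volume) (zero_le_one (α := ℝ))
      (intervalIntegrable_const (c := (y + 1) ^ (-d))) hcont.intervalIntegrable
      fun x hx => Real.rpow_le_rpow_of_nonpos (by linarith [hx.1]) (by linarith [hx.2])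
        (by linarith)
    simpa using this
  · have := intervalIntegral.integral_mono_on (μ := volume) (zero_le_one (α := ℝ))
      hcont.intervalIntegrable (intervalIntegrable_const (c := y ^ (-d)))
      fun x hx => Real.rpow_le_rpow_of_nonpos hy (by linarith [hx.1]) (by linarith)
    simpa using this

lemma shiftedPowerIntegral_div {d n y : ℝ} (hn : 0 < n) (hy : 0 ≤ y) :
    n ^ (1 - d) * shiftedPowerIntegral d (y / n) =
      ((y + n) ^ (1 - d) - y ^ (1 - d)) / (1 - d) := by
  have h : y / n + 1 = (y + n) / n := by field_simp
  have hn' := (Real.rpow_pos_of_pos hn (1 - d)).ne'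
  rw [shiftedPowerIntegral, h, Real.div_rpow (by linarith) hn.le, Real.div_rpow hy hn.le]
  field_simp

lemma sum_shiftedPowerIntegral (d y : ℝ) (n : ℕ) :
    ∑ k ∈ Finset.range n, shiftedPowerIntegral d (k + y) =
      ((y + n) ^ (1 - d) - y ^ (1 - d)) / (1 - d) := by
  have h := Finset.sum_range_sub (fun k : ℕ => (y + k) ^ (1 - d) / (1 - d)) n
  simp only [Nat.cast_zero, add_zero, ← sub_div] at h
  rw [← h]
  refine Finset.sum_congr rfl fun k _ => ?_
  rw [shiftedPowerIntegral]
  push_cast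
  ring_nf

lemma sum_Icc_rpow_neg_mem_Icc {d y : ℝ} (hd0 : 0 ≤ d) (hd : d < 1) (hy : 0 < y)
    {n : ℕ} (hn : 0 < n) :
    ∑ k ∈ Finset.Icc 1 n, ((k : ℝ) + y) ^ (-d) ∈
      Set.Icc ((n : ℝ) ^ (1 - d) * shiftedPowerIntegral d ((y + 1) / n))
        ((n : ℝ) ^ (1 - d) * shiftedPowerIntegral d (y / n)) := by
  have hn' : (0 : ℝ) < n := Nat.cast_pos.2 hn
  have hsum : ∑ k ∈ Finset.Icc 1 n, ((k : ℝ) + y) ^ (-d) =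
      ∑ k ∈ Finset.range n, ((k : ℝ) + y + 1) ^ (-d) := by
    rw [← Finset.Ico_succ_right_eq_Icc, Finset.sum_Ico_eq_sum_range]
    refine Finset.sum_congr (by simp) fun k _ => ?_
    push_cast
    ring_nf
  rw [hsum, shiftedPowerIntegral_div hn' (by linarith), shiftedPowerIntegral_div hn' hy.le,
    ← sum_shiftedPowerIntegral, ← sum_shiftedPowerIntegral]
  constructor
  · refine Finset.sum_le_sum fun k _ => ?_
    rw [← add_assoc]
    exact (shiftedPowerIntegral_mem_Icc hd0 hd (by positivity)).2
  · exact Finset.sum_le_sum fun k _ => (shiftedPowerIntegral_mem_Icc hd0 hd (by positivity)).1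

lemma continuous_shiftedPowerIntegral_rpow {p d : ℝ} (hp : 0 ≤ p) (hd : d < 1) :
    Continuous fun y => shiftedPowerIntegral d y ^ p :=
  (continuous_shiftedPowerIntegral hd).rpow_const fun _ => Or.inr hp

lemma antitoneOn_shiftedPowerIntegral_rpow {p d : ℝ} (hp : 0 ≤ p) (hd0 : 0 ≤ d) (hd : d < 1) :
    AntitoneOn (fun y => shiftedPowerIntegral d y ^ p) (Set.Ici 0) :=
  fun _ hx _ hy hxy => Real.rpow_le_rpow (shiftedPowerIntegral_pos hd hy).le
    (antitoneOn_shiftedPowerIntegral hd0 hd hx hy hxy) hp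

lemma integrableOn_shiftedPowerIntegral_rpow {p d : ℝ} (hp : 0 ≤ p) (hd0 : 0 ≤ d) (hd : d < 1)
    (hpd : 1 < d * p) :
    IntegrableOn (fun y => shiftedPowerIntegral d y ^ p) (Set.Ioi 0) := by
  have hcont := continuous_shiftedPowerIntegral_rpow hp hd
  rw [← Set.Ioc_union_Ioi_eq_Ioi (zero_le_one (α := ℝ))]
  refine (hcont.integrableOn_Ioc).union ?_
  refine (integrableOn_Ioi_rpow_of_lt (a := -(d * p)) (by linarith) zero_lt_one).mono'
    hcont.aestronglyMeasurable ?_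
  filter_upwards [ae_restrict_mem measurableSet_Ioi] with y hy
  have hy0 : (0 : ℝ) < y := zero_lt_one.trans hy
  have hpos := shiftedPowerIntegral_pos hd hy0.le
  rw [Real.norm_of_nonneg (Real.rpow_nonneg hpos.le p), ← neg_mul, Real.rpow_mul hy0.le]
  exact Real.rpow_le_rpow hpos.le (shiftedPowerIntegral_mem_Icc hd0 hd hy0).2 hp

lemma integral_step_mem_Icc {f : ℝ → ℝ} (hf : AntitoneOn f (Set.Ici 0)) {n : ℝ} (hn : 0 < n)
    {a : ℝ} (ha : 0 ≤ a) :
    ∫ y in (a / n)..((a + 1) / n), f y ∈ Set.Icc (n⁻¹ * f ((a + 1) / n)) (n⁻¹ * f (a / n)) := by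
  have han : 0 ≤ a / n := by positivity
  have hle : a / n ≤ (a + 1) / n := by gcongr; linarith
  have hlen : (a + 1) / n - a / n = n⁻¹ := by field_simp; ring
  have hint : IntervalIntegrable f volume (a / n) ((a + 1) / n) := by
    refine (hf.mono ?_).intervalIntegrable
    rw [Set.uIcc_of_le hle]
    exact fun x hx => han.trans hx.1
  constructor
  · have := intervalIntegral.integral_mono_on (μ := volume) hle
      (intervalIntegrable_const (c := f ((a + 1) / n))) hint
      fun x hx => hf (han.trans hx.1) (han.trans hle) hx.2
    simpa [hlen] using this
  · have := intervalIntegral.integral_mono_on (μ := volume) hle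
      hint (intervalIntegrable_const (c := f (a / n)))
      fun x hx => hf han (han.trans hx.1) hx.1
    simpa [hlen] using this

lemma hasSum_integral_step {f : ℝ → ℝ} (hcont : Continuous f) (hf : ∀ y, 0 ≤ y → 0 ≤ f y)
    (hint : IntegrableOn f (Set.Ioi 0)) {n : ℝ} (hn : 0 < n) :
    HasSum (fun j : ℕ => ∫ y in ((j : ℝ) / n)..(((j : ℝ) + 1) / n), f y)
      (∫ y in Set.Ioi (0:ℝ), f y) := by
  rw [hasSum_iff_tendsto_nat_of_nonneg]
  · have hsum : ∀ m : ℕ, ∑ j ∈ Finset.range m, ∫ y in ((j : ℝ) / n)..(((j : ℝ) + 1) / n), f y =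
        ∫ y in (0:ℝ)..((m : ℝ) / n), f y := by
      intro m
      have := intervalIntegral.sum_integral_adjacent_intervals (μ := volume) (f := f)
        (a := fun j : ℕ => (j : ℝ) / n) (n := m) fun k _ => hcont.intervalIntegrable _ _
      simpa using this
    simp only [hsum]
    exact intervalIntegral_tendsto_integral_Ioi 0 hint
      (tendsto_natCast_atTop_atTop.atTop_div_const hn)
  · intro j
    refine intervalIntegral.integral_nonneg (by gcongr; linarith) fun y hy => hf y ?_
    exact le_trans (by positivity) hy.1

theorem sum_power_tail_tendsto_integral
    (p d : ℝ) (hp : 1 < p) (hd1 : 1 / p < d) (hd2 : d < 1) :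
    IntegrableOn (fun y : ℝ => |∫ x in (0:ℝ)..1, (x + y) ^ (-d)| ^ p) (Set.Ioi 0) volume ∧
    0 < ∫ y in Set.Ioi (0:ℝ), |∫ x in (0:ℝ)..1, (x + y) ^ (-d)| ^ p ∧
    Tendsto
      (fun n : ℕ => (n : ℝ) ^ (-(1 + p * (1 - d))) *
        ∑' j : ℕ, |∑ k ∈ Finset.Icc 1 n, ((k : ℝ) + ((j : ℝ) + 1)) ^ (-d)| ^ p)
      atTop
      (nhds (∫ y in Set.Ioi (0:ℝ), |∫ x in (0:ℝ)..1, (x + y) ^ (-d)| ^ p)) := by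
  have hp0 : 0 < p := by linarith
  have hd0 : 0 < d := lt_trans (by positivity) hd1
  have hpd : 1 < d * p := (div_lt_iff₀ hp0).1 hd1
  set F : ℝ → ℝ := fun y => shiftedPowerIntegral d y ^ p with hF
  have hEq : Set.EqOn (fun y : ℝ => |∫ x in (0:ℝ)..1, (x + y) ^ (-d)| ^ p) F (Set.Ioi 0) := by
    intro y hy
    simp only [hF]
    rw [integral_add_rpow_neg hd2, abs_of_pos (shiftedPowerIntegral_pos hd2 (le_of_lt hy))]
  have hcont : Continuous F := continuous_shiftedPowerIntegral_rpow hp0.le hd2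
  have hanti : AntitoneOn F (Set.Ici 0) :=
    antitoneOn_shiftedPowerIntegral_rpow hp0.le hd0.le hd2
  have hpos : ∀ y, 0 ≤ y → 0 < F y :=
    fun y hy => Real.rpow_pos_of_pos (shiftedPowerIntegral_pos hd2 hy) p
  have hint : IntegrableOn F (Set.Ioi 0) :=
    integrableOn_shiftedPowerIntegral_rpow hp0.le hd0.le hd2 hpd
  rw [integrableOn_congr_fun hEq measurableSet_Ioi, setIntegral_congr_fun measurableSet_Ioi hEq]
  refine ⟨hint, ?_, ?_⟩
  · rw [setIntegral_pos_iff_support_of_nonneg_ae _ hint]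
    · have : Function.support F ∩ Set.Ioi 0 = Set.Ioi 0 :=
        Set.inter_eq_right.2 fun y hy => (hpos y (le_of_lt hy)).ne'
      simp [this]
    · filter_upwards [ae_restrict_mem measurableSet_Ioi] with y hy using (hpos y (le_of_lt hy)).le
  have hlower : Tendsto (fun n : ℕ => (∫ y in Set.Ioi (0:ℝ), F y) -
      ∫ y in (0:ℝ)..(2 / (n : ℝ)), F y) atTop (nhds (∫ y in Set.Ioi (0:ℝ), F y)) := by
    have h0 := (intervalIntegral.continuous_primitive
      (fun a b => hcont.intervalIntegrable (μ := volume) a b) 0).tendsto 0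
    rw [intervalIntegral.integral_same] at h0
    simpa using tendsto_const_nhds.sub (h0.comp (tendsto_const_div_atTop_nhds_zero_nat (2 : ℝ)))
  have hbounds : ∀ᶠ n : ℕ in atTop, (n : ℝ) ^ (-(1 + p * (1 - d))) *
      ∑' j : ℕ, |∑ k ∈ Finset.Icc 1 n, ((k : ℝ) + ((j : ℝ) + 1)) ^ (-d)| ^ p ∈
      Set.Icc ((∫ y in Set.Ioi (0:ℝ), F y) - ∫ y in (0:ℝ)..(2 / (n : ℝ)), F y)
        (∫ y in Set.Ioi (0:ℝ), F y) := by
    filter_upwards [eventually_gt_atTop 0] with n hn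
    have hn' : (0 : ℝ) < n := Nat.cast_pos.2 hn
    have hG := hasSum_integral_step hcont (fun y hy => (hpos y hy).le) hint hn'
    set G : ℕ → ℝ := fun j => ∫ y in ((j : ℝ) / n)..(((j : ℝ) + 1) / n), F y with hGdef
    have hG2 : HasSum (fun j => G (j + 2)) ((∫ y in Set.Ioi (0:ℝ), F y) -
        ∫ y in (0:ℝ)..(2 / (n : ℝ)), F y) := by
      have hsum := intervalIntegral.sum_integral_adjacent_intervals (μ := volume) (f := F)
        (a := fun j : ℕ => (j : ℝ) / n) (n := 2) fun k _ => hcont.intervalIntegrable _ _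
      have hshift := (hasSum_nat_add_iff' 2).2 hG
      have hinit : ∑ j ∈ Finset.range 2, G j = ∫ y in (0:ℝ)..(2 / (n : ℝ)), F y := by
        simpa [hGdef] using hsum
      rwa [hinit] at hshift
    have hscale : ∀ y : ℝ, 0 ≤ y → (n : ℝ) ^ (-(1 + p * (1 - d))) *
        ((n : ℝ) ^ (1 - d) * shiftedPowerIntegral d y) ^ p = (n : ℝ)⁻¹ * F y := by
      intro y hy
      rw [Real.mul_rpow (by positivity) (shiftedPowerIntegral_pos hd2 hy).le,
        ← Real.rpow_mul hn'.le, ← mul_assoc, ← Real.rpow_add hn', ← Real.rpow_neg_one]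
      congr 2
      ring
    set T : ℕ → ℝ := fun j => (n : ℝ) ^ (-(1 + p * (1 - d))) *
      |∑ k ∈ Finset.Icc 1 n, ((k : ℝ) + ((j : ℝ) + 1)) ^ (-d)| ^ p with hT
    have hTG : ∀ j, G (j + 2) ≤ T j ∧ T j ≤ G j := by
      intro j
      have hS := sum_Icc_rpow_neg_mem_Icc (y := (j : ℝ) + 1) hd0.le hd2 (by positivity) hn
      have hSnonneg : 0 ≤ ∑ k ∈ Finset.Icc 1 n, ((k : ℝ) + ((j : ℝ) + 1)) ^ (-d) :=
        Finset.sum_nonneg fun k _ => by positivity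
      have hy2 : (0 : ℝ) ≤ ((j : ℝ) + 1 + 1) / n := by positivity
      have hlow := (integral_step_mem_Icc hanti hn' (a := (j : ℝ) + 1 + 1) (by positivity)).2
      have hupp := (integral_step_mem_Icc hanti hn' (a := (j : ℝ)) (by positivity)).1
      rw [← hscale _ (by positivity)] at hlow hupp
      simp only [hT, abs_of_nonneg hSnonneg]
      constructor
      · have hcast : ((j + 2 : ℕ) : ℝ) = (j : ℝ) + 1 + 1 := by push_cast; ring
        simp only [hGdef, hcast]
        refine hlow.trans (mul_le_mul_of_nonneg_left
          (Real.rpow_le_rpow ?_ hS.1 hp0.le) (by positivity))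
        exact mul_nonneg (by positivity) (shiftedPowerIntegral_pos hd2 hy2).le
      · exact (mul_le_mul_of_nonneg_left
          (Real.rpow_le_rpow hSnonneg hS.2 hp0.le) (by positivity)).trans hupp
    have hTsum : Summable T :=
      hG.summable.of_nonneg_of_le (fun j => by simp only [hT]; positivity) fun j => (hTG j).2
    rw [← tsum_mul_left]
    exact ⟨hasSum_le (fun j => (hTG j).1) hG2 hTsum.hasSum,
      hasSum_le (fun j => (hTG j).2) hTsum.hasSum hG⟩
  exact tendsto_of_tendsto_of_tendsto_of_le_of_le' hlower tendsto_const_nhds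
    (hbounds.mono fun _ h => h.1) (hbounds.mono fun _ h => h.2)
end

section
/- Let 1≤p<2 and let {ψ_j : j≥0} ⊂ ℝ satisfy Σ_{j=0}^∞ |ψ_j|^p < ∞. If 𝒲_n(p) → ∞ as n→∞, then (sup_{j∈ℤ} |w_{nj}|)/𝒲_n(p) → 0 as n→∞. -/
open Filter

theorem exists_abs_psiZ_le {p : ℝ} (hp : 0 < p) {ψ : ℕ → ℝ}
    (hψ : Summable fun j => |ψ j| ^ p) : ∃ C : ℝ, 0 ≤ C ∧ ∀ j, |psiZ ψ j| ≤ C := by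
  have hS : 0 ≤ ∑' j, |ψ j| ^ p := tsum_nonneg fun j => by positivity
  refine ⟨(∑' j, |ψ j| ^ p) ^ p⁻¹, by positivity, fun j => ?_⟩
  unfold psiZ
  split_ifs
  · rw [Real.le_rpow_inv_iff_of_pos (abs_nonneg _) hS hp]
    exact hψ.le_tsum j.toNat fun i _ => by positivity
  · rw [abs_zero]
    positivity

theorem wCoef_succ (ψ : ℕ → ℝ) (n : ℕ) (j : ℤ) :
    wCoef ψ (n + 1) j = wCoef ψ n j + psiZ ψ (n + 1 - j) := by
  unfold wCoef
  have h : Finset.Icc (1 : ℤ) ((n + 1 : ℕ) : ℤ) = insert ((n : ℤ) + 1) (Finset.Icc 1 (n : ℤ)) := by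
    ext k
    simp only [Finset.mem_Icc, Finset.mem_insert]
    omega
  rw [h, Finset.sum_insert (by simp), add_comm]

theorem wCoef_add_one_sub (ψ : ℕ → ℝ) (n : ℕ) (j : ℤ) :
    wCoef ψ n (j + 1) - wCoef ψ n j = psiZ ψ (-j) - psiZ ψ (n - j) := by
  induction n with
  | zero => simp [wCoef]
  | succ n ih =>
    rw [wCoef_succ, wCoef_succ, show (n : ℤ) + 1 - (j + 1) = n - j by ring]
    push_cast
    linarith

theorem abs_wCoef_sub_le_abs_wCoef_add {ψ : ℕ → ℝ} {C : ℝ} (hC : ∀ j, |psiZ ψ j| ≤ C)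
    (n : ℕ) (j : ℤ) (i : ℕ) : |wCoef ψ n j| - 2 * C * i ≤ |wCoef ψ n (j + i)| := by
  induction i with
  | zero => simp
  | succ i ih =>
    have hstep := wCoef_add_one_sub ψ n (j + i)
    have htri := abs_sub_abs_le_abs_sub (wCoef ψ n (j + i)) (wCoef ψ n (j + i + 1))
    rw [abs_sub_comm, hstep] at htri
    have hdiff := abs_sub (psiZ ψ (-(j + i))) (psiZ ψ (n - (j + i)))
    have h₁ := hC (-(j + i))
    have h₂ := hC (n - (j + i))
    push_cast
    rw [← add_assoc]
    linarith

/-- Since `j ↦ w_{nj}` has increments at most `2C`, a large value of `|w_{nj}|` forces a block of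
`m` consecutive large values, which `𝒲_n(p)` controls. -/
theorem abs_wCoef_le {p : ℝ} (hp : 0 < p) {ψ : ℕ → ℝ} {C : ℝ} (hC₀ : 0 ≤ C)
    (hC : ∀ j, |psiZ ψ j| ≤ C) {n : ℕ} (hs : Summable fun j => |wCoef ψ n j| ^ p)
    {m : ℕ} (hm : 0 < m) (j : ℤ) :
    |wCoef ψ n j| ≤ 2 * C * m + (m : ℝ)⁻¹ ^ (1 / p) * Wnorm ψ p n := by
  have hS : 0 ≤ ∑' j, |wCoef ψ n j| ^ p := tsum_nonneg fun j => by positivity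
  have hm' : (0 : ℝ) < m := by exact_mod_cast hm
  rw [Wnorm, ← Real.mul_rpow (by positivity) hS, ← sub_le_iff_le_add']
  rcases le_or_gt (|wCoef ψ n j| - 2 * C * m) 0 with h | h
  · exact h.trans (by positivity)
  rw [one_div, Real.le_rpow_inv_iff_of_pos h.le (by positivity) hp, inv_mul_eq_div,
    le_div_iff₀' hm']
  have hinj : Function.Injective fun i : ℕ => j + (i : ℤ) := fun a b hab => by simpa using hab
  calc (m : ℝ) * (|wCoef ψ n j| - 2 * C * m) ^ p
      = ∑ _i ∈ Finset.range m, (|wCoef ψ n j| - 2 * C * m) ^ p := by simp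
    _ ≤ ∑ i ∈ Finset.range m, |wCoef ψ n (j + i)| ^ p := by
        refine Finset.sum_le_sum fun i hi => Real.rpow_le_rpow h.le ?_ hp.le
        refine le_trans ?_ (abs_wCoef_sub_le_abs_wCoef_add hC n j i)
        have him : (i : ℝ) ≤ m := by exact_mod_cast (Finset.mem_range.mp hi).le
        gcongr
    _ ≤ ∑' i : ℕ, |wCoef ψ n (j + i)| ^ p :=
        (hs.comp_injective hinj).sum_le_tsum _ fun i _ => by positivity
    _ ≤ ∑' j, |wCoef ψ n j| ^ p :=
        tsum_comp_le_tsum_of_inj hs (fun i => by positivity) hinj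

theorem summable_of_Wnorm_pos {p : ℝ} (hp : 0 < p) {ψ : ℕ → ℝ} {n : ℕ} (h : 0 < Wnorm ψ p n) :
    Summable fun j => |wCoef ψ n j| ^ p := by
  by_contra hs
  rw [Wnorm, tsum_eq_zero_of_not_summable hs, Real.zero_rpow (by positivity)] at h
  exact h.false

theorem sup_wCoef_div_Wnorm_tendsto_zero
    (p : ℝ) (hp1 : 1 ≤ p) (hp2 : p < 2)
    (ψ : ℕ → ℝ) (hψ : Summable fun j => |ψ j| ^ p)
    (hW : Tendsto (fun n => Wnorm ψ p n) atTop atTop) :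
    Tendsto (fun n : ℕ => (⨆ j : ℤ, |wCoef ψ n j|) / Wnorm ψ p n) atTop (nhds 0) := by
  have hp : 0 < p := by linarith
  obtain ⟨C, hC₀, hC⟩ := exists_abs_psiZ_le hp hψ
  have hblock : Tendsto (fun m : ℕ => (m : ℝ)⁻¹ ^ (1 / p)) atTop (nhds 0) := by
    have h := (tendsto_inv_atTop_nhds_zero_nat (𝕜 := ℝ)).rpow_const
      (p := 1 / p) (Or.inr (by positivity))
    rwa [Real.zero_rpow (by positivity)] at h
  rw [Metric.tendsto_nhds]
  intro ε hε
  obtain ⟨m, hmε, hm⟩ :=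
    ((hblock.eventually (gt_mem_nhds (half_pos hε))).and (eventually_gt_atTop 0)).exists
  filter_upwards [hW.eventually_gt_atTop 0, hW.eventually_gt_atTop (2 * C * m / (ε / 2))]
    with n hn hnε
  have hsup : (⨆ j : ℤ, |wCoef ψ n j|) ≤ 2 * C * m + (m : ℝ)⁻¹ ^ (1 / p) * Wnorm ψ p n :=
    ciSup_le (abs_wCoef_le hp hC₀ hC (summable_of_Wnorm_pos hp hn) hm)
  have hsup₀ : 0 ≤ ⨆ j : ℤ, |wCoef ψ n j| := Real.iSup_nonneg fun j => abs_nonneg _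
  rw [Real.dist_0_eq_abs, abs_of_nonneg (by positivity), div_lt_iff₀ hn]
  rw [div_lt_iff₀ (half_pos hε)] at hnε
  have hmul := mul_lt_mul_of_pos_right hmε hn
  linarith
end

section
/- Let 1<p<2 with conjugate exponent q = p/(p-1), and let {ψ_j : j≥0} ⊂ ℝ satisfy Σ_{j=0}^∞ |ψ_j|^p < ∞. Then for every n≥1, sup_{m∈ℤ} |w_{nm}|^p ≤ p·(Σ_{j=-∞}^∞ |w_{nj}|^p)^{1/q}·(2^p·Σ_{j=0}^∞ |ψ_j|^p)^{1/p} + 2^p·p·Σ_{j=0}^∞ |ψ_j|^p. -/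
open Filter

theorem psiZ_hasSum {p : ℝ} (hp : p ≠ 0) {ψ : ℕ → ℝ} (hψ : Summable fun j => |ψ j| ^ p) :
    HasSum (fun j : ℤ => |psiZ ψ j| ^ p) (∑' j : ℕ, |ψ j| ^ p) := by
  have hinj : Function.Injective (fun k : ℕ => (k : ℤ)) := Nat.cast_injective
  refine (hinj.hasSum_iff ?_).1 ?_
  · intro x hx
    have : ¬ 0 ≤ x := fun h => hx ⟨x.toNat, Int.toNat_of_nonneg h⟩
    simp [psiZ, this, Real.zero_rpow hp]
  · simpa [Function.comp_def, psiZ] using hψ.hasSum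

theorem psiZ_sub_hasSum {p : ℝ} (hp : p ≠ 0) {ψ : ℕ → ℝ} (hψ : Summable fun j => |ψ j| ^ p)
    (c : ℤ) : HasSum (fun j : ℤ => |psiZ ψ (c - j)| ^ p) (∑' j : ℕ, |ψ j| ^ p) :=
  (Equiv.subLeft c).hasSum_iff.2 (psiZ_hasSum hp hψ)

theorem summable_wCoef_rpow {p : ℝ} (hp : 1 ≤ p) {ψ : ℕ → ℝ}
    (hψ : Summable fun j => |ψ j| ^ p) (n : ℕ) :
    Summable fun j : ℤ => |wCoef ψ n j| ^ p := by
  have hp0 : p ≠ 0 := by positivity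
  refine Summable.of_nonneg_of_le (fun _ => by positivity) (fun j => ?_)
    ((summable_sum (s := Finset.Icc (1 : ℤ) n)
      fun k _ => (psiZ_sub_hasSum hp0 hψ k).summable).mul_left
        (((Finset.Icc (1 : ℤ) n).card : ℝ) ^ (p - 1)))
  refine le_trans ?_ (Real.rpow_sum_le_const_mul_sum_rpow (Finset.Icc (1 : ℤ) n)
    (fun k => psiZ ψ (k - j)) hp)
  exact Real.rpow_le_rpow (abs_nonneg _) (Finset.abs_sum_le_sum_abs _ _) (by positivity)

theorem wCoef_sub_wCoef_add_one (ψ : ℕ → ℝ) (n : ℕ) (j : ℤ) :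
    wCoef ψ n j - wCoef ψ n (j + 1) = psiZ ψ (n - j) - psiZ ψ (0 - j) := by
  unfold wCoef
  induction n with
  | zero => simp
  | succ n ih =>
    have h : Finset.Icc (1 : ℤ) ((n + 1 : ℕ) : ℤ) =
        insert ((n : ℤ) + 1) (Finset.Icc (1 : ℤ) n) := by
      ext x
      simp only [Finset.mem_Icc, Finset.mem_insert]
      omega
    rw [h, Finset.sum_insert (by simp), Finset.sum_insert (by simp)]
    have h' : (n : ℤ) + 1 - (j + 1) = n - j := by ring
    rw [h']
    push_cast
    linarith

theorem wCoef_eq_zero_of_lt (ψ : ℕ → ℝ) {n : ℕ} {j : ℤ} (h : (n : ℤ) < j) :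
    wCoef ψ n j = 0 := by
  refine Finset.sum_eq_zero fun k hk => ?_
  have := (Finset.mem_Icc.1 hk).2
  exact if_neg (by omega)

theorem abs_sub_rpow_le {p : ℝ} (hp : 1 ≤ p) (x y : ℝ) :
    |x - y| ^ p ≤ 2 ^ (p - 1) * (|x| ^ p + |y| ^ p) :=
  (Real.rpow_le_rpow (abs_nonneg _) (abs_sub x y) (by positivity)).trans
    (mod_cast NNReal.rpow_add_le_mul_rpow_add_rpow ⟨|x|, abs_nonneg x⟩ ⟨|y|, abs_nonneg y⟩ hp)

theorem rpow_sub_rpow_le {p a b : ℝ} (hp : 1 ≤ p) (ha : 0 ≤ a) (hb : 0 ≤ b) :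
    a ^ p - b ^ p ≤ p * (a ^ (p - 1) * |a - b|) := by
  rcases ha.eq_or_lt with rfl | ha
  · have : (0 : ℝ) ≤ b ^ p := by positivity
    rw [Real.zero_rpow (by positivity)]
    have : 0 ≤ p * ((0 : ℝ) ^ (p - 1) * |0 - b|) := by positivity
    linarith
  · have hbern := one_add_mul_self_le_rpow_one_add (s := b / a - 1) (by
      have : 0 ≤ b / a := by positivity
      linarith) hp
    rw [add_sub_cancel, Real.div_rpow hb ha.le, le_div_iff₀ (by positivity)] at hbern
    have hpow : a ^ p = a ^ (p - 1) * a := by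
      rw [← Real.rpow_add_one ha.ne', sub_add_cancel]
    have heq : (1 + p * (b / a - 1)) * a ^ p = a ^ p + p * (a ^ (p - 1) * (b - a)) := by
      rw [hpow]; field_simp
    have hle : p * (a ^ (p - 1) * (a - b)) ≤ p * (a ^ (p - 1) * |a - b|) := by
      gcongr
      exact le_abs_self _
    linarith

theorem rpow_le_sum_add_rpow {p : ℝ} (hp : 1 ≤ p) (w : ℤ → ℝ) (m : ℤ) (N : ℕ) :
    |w m| ^ p ≤ p * ∑ j ∈ Finset.Ico m (m + N), |w j| ^ (p - 1) * |w j - w (j + 1)| +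
      |w (m + N)| ^ p := by
  induction N with
  | zero => simp
  | succ N ih =>
    have h : Finset.Ico m (m + (N + 1 : ℕ)) = insert (m + N) (Finset.Ico m (m + N)) := by
      ext x
      simp only [Finset.mem_Ico, Finset.mem_insert]
      omega
    rw [h, Finset.sum_insert (by simp), mul_add]
    have hstep := rpow_sub_rpow_le hp (abs_nonneg (w (m + N))) (abs_nonneg (w (m + N + 1)))
    have hle : p * (|w (m + N)| ^ (p - 1) * |(|w (m + N)| - |w (m + N + 1)|)|) ≤
        p * (|w (m + N)| ^ (p - 1) * |w (m + N) - w (m + N + 1)|) := by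
      have habs := abs_abs_sub_abs_le_abs_sub (w (m + N)) (w (m + N + 1))
      gcongr ?_ * (?_ * ?_)
    push_cast
    rw [← add_assoc]
    linarith

theorem sum_abs_wCoef_sub_rpow_le {p : ℝ} (hp : 1 ≤ p) {ψ : ℕ → ℝ}
    (hψ : Summable fun j => |ψ j| ^ p) (n : ℕ) (s : Finset ℤ) :
    ∑ j ∈ s, |wCoef ψ n j - wCoef ψ n (j + 1)| ^ p ≤ 2 ^ p * ∑' j : ℕ, |ψ j| ^ p := by
  have hp0 : p ≠ 0 := by positivity
  have hbound (c : ℤ) : ∑ j ∈ s, |psiZ ψ (c - j)| ^ p ≤ ∑' j : ℕ, |ψ j| ^ p :=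
    sum_le_hasSum s (fun _ _ => by positivity) (psiZ_sub_hasSum hp0 hψ c)
  calc ∑ j ∈ s, |wCoef ψ n j - wCoef ψ n (j + 1)| ^ p
      ≤ ∑ j ∈ s, 2 ^ (p - 1) * (|psiZ ψ (n - j)| ^ p + |psiZ ψ (0 - j)| ^ p) := by
        refine Finset.sum_le_sum fun j _ => ?_
        rw [wCoef_sub_wCoef_add_one]
        exact abs_sub_rpow_le hp _ _
    _ = 2 ^ (p - 1) * (∑ j ∈ s, |psiZ ψ (n - j)| ^ p + ∑ j ∈ s, |psiZ ψ (0 - j)| ^ p) := by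
        rw [← Finset.mul_sum, Finset.sum_add_distrib]
    _ ≤ 2 ^ (p - 1) * (∑' j : ℕ, |ψ j| ^ p + ∑' j : ℕ, |ψ j| ^ p) := by
        gcongr
        exacts [hbound n, hbound 0]
    _ = 2 ^ p * ∑' j : ℕ, |ψ j| ^ p := by
        rw [← two_mul, ← mul_assoc, ← Real.rpow_add_one two_ne_zero, sub_add_cancel]

theorem sup_wCoef_pow_le
    (p : ℝ) (hp1 : 1 < p) (hp2 : p < 2)
    (ψ : ℕ → ℝ) (hψ : Summable fun j => |ψ j| ^ p)
    (n : ℕ) (hn : 1 ≤ n) :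
    (⨆ m : ℤ, |wCoef ψ n m| ^ p) ≤
      p * (∑' j : ℤ, |wCoef ψ n j| ^ p) ^ (1 / (p / (p - 1))) *
        (2 ^ p * ∑' j : ℕ, |ψ j| ^ p) ^ (1 / p) +
      2 ^ p * p * ∑' j : ℕ, |ψ j| ^ p := by
  have hp0 : 0 < p := by positivity
  have hpq : (p / (p - 1)).HolderConjugate p := (Real.HolderConjugate.conjExponent hp1).symm
  have hT : 0 ≤ ∑' j : ℕ, |ψ j| ^ p := tsum_nonneg fun _ => by positivity
  refine ciSup_le fun m => ?_
  set N := (n + 1 - m).toNat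
  have hmain := rpow_le_sum_add_rpow hp1.le (wCoef ψ n) m N
  rw [wCoef_eq_zero_of_lt ψ (show (n : ℤ) < m + N by omega), abs_zero,
    Real.zero_rpow hp0.ne', add_zero] at hmain
  have hholder := Real.inner_le_Lp_mul_Lq_of_nonneg (Finset.Ico m (m + N)) hpq
    (f := fun j => |wCoef ψ n j| ^ (p - 1)) (g := fun j => |wCoef ψ n j - wCoef ψ n (j + 1)|)
    (fun _ _ => by positivity) (fun _ _ => by positivity)
  have hexp (x : ℝ) : (|x| ^ (p - 1)) ^ (p / (p - 1)) = |x| ^ p := by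
    rw [← Real.rpow_mul (abs_nonneg x), mul_div_cancel₀ _ (sub_pos.2 hp1).ne']
  simp only [hexp] at hholder
  have hw : ∑ j ∈ Finset.Ico m (m + N), |wCoef ψ n j| ^ p ≤ ∑' j : ℤ, |wCoef ψ n j| ^ p :=
    (summable_wCoef_rpow hp1.le hψ n).sum_le_tsum _ fun _ _ => by positivity
  have hd := sum_abs_wCoef_sub_rpow_le hp1.le hψ n (Finset.Ico m (m + N))
  have hq := hpq.pos
  calc |wCoef ψ n m| ^ p
      ≤ p * ((∑' j : ℤ, |wCoef ψ n j| ^ p) ^ (1 / (p / (p - 1))) *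
        (2 ^ p * ∑' j : ℕ, |ψ j| ^ p) ^ (1 / p)) := by
        refine hmain.trans (mul_le_mul_of_nonneg_left (hholder.trans ?_) hp0.le)
        gcongr
    _ ≤ _ := by
        rw [← mul_assoc]
        exact le_add_of_nonneg_right (by positivity)
end
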